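/- In ℝ³ with standard inner product, the Coxeter root system B_3(t) = {e_i ± e_j : 1 ≤ i < j ≤ 3} ∪ {t e_i : 1 ≤ i ≤ 3} with t ≠ 0 is a V-system: for every α in the system and every 2-plane π containing α, Σ_{β∈π∩A} ⟨β,α^∨⟩ β^∨ is a scalar multiple of α^∨, where ∨ is taken with respect to the canonical form G(x,y) = Σ_α ⟨α,x⟩⟨α,y⟩. -/

import Mathlib

open Matrix
open scoped Classical

/-!
Let `T_S x = ∑ β ∈ S, ⟨β, x⟩ β`, so that `G(x, y) = ⟨T_A x, y⟩` and `α^∨ = T_A⁻¹ α`. If `α ∈ π`,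
the reflection `s_α` permutes `S = π ∩ A` up to signs, and the terms of `T_S α` do not see these
signs. As `⟨s_α β, α⟩ = -⟨β, α⟩`, reindexing `T_S α` by `s_α` shows that it is a multiple of `α`.
For the whole space this says that `α^∨` is a multiple of `α`. Hence
`T_A (∑ β ∈ S, ⟨β, α^∨⟩ β^∨) = T_S α^∨` is a multiple of `α`, and applying `T_A⁻¹` concludes.

The reflections in the roots of `B₃(t)` only permute the absolute values of the coordinates, and
these values determine membership in `±B₃(t)`.
-/

theorem sum_comp_eq_of_mem_or_neg_mem {V M : Type*} [AddGroup V] [AddCommMonoid M]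
    {A : Finset V} {f : V → M} (hA : ∀ v ∈ A, -v ∉ A) (hf : ∀ v, f (-v) = f v)
    (s : V →+ V) (hs : Function.Injective s) (hsA : ∀ v ∈ A, s v ∈ A ∨ -s v ∈ A) :
    ∑ v ∈ A, f (s v) = ∑ v ∈ A, f v := by
  let σ : V → V := fun v => if s v ∈ A then s v else -s v
  have eq_or_neg (v : V) : σ v = s v ∨ σ v = -s v := ite_eq_or_eq ..
  have mapsTo : Set.MapsTo σ A A := by
    intro v hv
    by_cases h : s v ∈ A
    · simpa only [σ, if_pos h, Finset.mem_coe] using h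
    · simpa only [σ, if_neg h, Finset.mem_coe] using (hsA v hv).resolve_left h
  have injOn : Set.InjOn σ A := by
    intro v hv w hw h
    have eq_or_eq_neg : v = w ∨ v = -w := by
      rw [← hs.eq_iff, ← hs.eq_iff (b := -w), map_neg]
      rcases eq_or_neg v with hσv | hσv <;> rcases eq_or_neg w with hσw | hσw <;>
        rw [hσv, hσw] at h
      · exact .inl h
      · exact .inr h
      · exact .inr (neg_eq_iff_eq_neg.mp h)
      · exact .inl (neg_inj.mp h)
    exact eq_or_eq_neg.resolve_right fun h => hA w hw (h ▸ hv)
  have surjOn : Set.SurjOn σ A A := Finset.surjOn_of_injOn_of_card_le σ mapsTo injOn le_rfl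
  refine Finset.sum_nbij σ mapsTo injOn surjOn fun v _ => ?_
  rcases eq_or_neg v with h | h <;> simp only [h, hf]

section Reflection

variable {K V : Type*} [Field K] [AddCommGroup V] [Module K V] (B : V →ₗ[K] V →ₗ[K] K)

/-- The reflection `β ↦ β - (2 ⟨β, α⟩ / ⟨α, α⟩) α` in `α` with respect to the bilinear form `B`.
It is the identity when `B α α = 0`. -/
def rootReflection (α : V) : V →ₗ[K] V :=
  Module.preReflection α ((2 / B α α) • B.flip α)

/-- The operator `x ↦ ∑ β ∈ A, ⟨β, x⟩ β`, which represents the canonical form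
`G(x, y) = ∑ β ∈ A, ⟨β, x⟩⟨β, y⟩` of `A` with respect to `B`. -/
def canonicalOperator (A : Finset V) : V →ₗ[K] V :=
  ∑ β ∈ A, (B β).smulRight β

/-- One vector from each pair `±β` of roots of a finite, not necessarily crystallographic, root
system; reflections therefore only have to preserve `A` up to sign. -/
structure IsHalfRootSystem (A : Finset V) : Prop where
  apply_self_ne_zero : ∀ α ∈ A, B α α ≠ 0
  neg_notMem : ∀ α ∈ A, -α ∉ A
  rootReflection_mem_or_neg_mem : ∀ α ∈ A, ∀ β ∈ A,
    rootReflection B α β ∈ A ∨ -rootReflection B α β ∈ A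

variable {B} {A : Finset V} {α : V}

theorem rootReflection_apply (α β : V) :
    rootReflection B α β = β - (2 / B α α * B β α) • α := by
  simp only [rootReflection, Module.preReflection_apply, LinearMap.smul_apply,
    LinearMap.flip_apply, smul_eq_mul]

theorem rootReflection_injective (hα : B α α ≠ 0) : Function.Injective (rootReflection B α) :=
  (Module.involutive_preReflection (by simp [hα])).injective

theorem apply_rootReflection_left (hα : B α α ≠ 0) (β : V) :
    B (rootReflection B α β) α = -B β α := by
  simp only [rootReflection_apply, map_sub, map_smul, LinearMap.sub_apply, LinearMap.smul_apply,
    smul_eq_mul]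
  field_simp
  ring

theorem rootReflection_mem {π : Submodule K V} {β : V} (hα : α ∈ π) (hβ : β ∈ π) :
    rootReflection B α β ∈ π := by
  rw [rootReflection_apply]
  exact π.sub_mem hβ (π.smul_mem _ hα)

theorem canonicalOperator_apply (x : V) : canonicalOperator B A x = ∑ β ∈ A, B β x • β := by
  simp only [canonicalOperator, LinearMap.sum_apply, LinearMap.smulRight_apply]

theorem apply_canonicalOperator_left (x y : V) :
    B (canonicalOperator B A x) y = ∑ β ∈ A, B β x * B β y := by
  simp only [canonicalOperator_apply, map_sum, map_smul, LinearMap.sum_apply,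
    LinearMap.smul_apply, smul_eq_mul]

theorem apply_canonicalOperator_left_comm (x y : V) :
    B (canonicalOperator B A x) y = B (canonicalOperator B A y) x := by
  simp only [apply_canonicalOperator_left, mul_comm]

theorem canonicalOperator_apply_eq_smul [NeZero (2 : K)] (hα : B α α ≠ 0)
    (hneg : ∀ β ∈ A, -β ∉ A)
    (hrefl : ∀ β ∈ A, rootReflection B α β ∈ A ∨ -rootReflection B α β ∈ A) :
    canonicalOperator B A α = ((∑ β ∈ A, B β α ^ 2) / B α α) • α := by
  have reindex : ∑ β ∈ A, B (rootReflection B α β) α • rootReflection B α β =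
      canonicalOperator B A α := by
    rw [canonicalOperator_apply]
    exact sum_comp_eq_of_mem_or_neg_mem (f := fun β => B β α • β) hneg (by simp)
      (rootReflection B α).toAddMonoidHom (rootReflection_injective hα) hrefl
  have term (β : V) : B (rootReflection B α β) α • rootReflection B α β =
      (2 * (B β α ^ 2 / B α α)) • α - B β α • β := by
    rw [apply_rootReflection_left hα, rootReflection_apply]
    module
  have eq_sub_self : canonicalOperator B A α =
      (2 * ((∑ β ∈ A, B β α ^ 2) / B α α)) • α - canonicalOperator B A α := by
    conv_lhs => rw [← reindex]
    simp only [term, Finset.sum_sub_distrib, ← Finset.sum_smul, ← Finset.mul_sum,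
      ← Finset.sum_div, canonicalOperator_apply]
  refine smul_right_injective V (two_ne_zero (α := K)) ?_
  simpa only [two_smul K (canonicalOperator B A α), smul_smul]
    using eq_sub_iff_add_eq.mp eq_sub_self

theorem IsHalfRootSystem.exists_canonicalOperator_filter_apply_eq_smul [NeZero (2 : K)]
    (hA : IsHalfRootSystem B A) (hα : α ∈ A) {π : Submodule K V} (hαπ : α ∈ π) :
    ∃ c : K, canonicalOperator B (A.filter (· ∈ π)) α = c • α := by
  refine ⟨_, canonicalOperator_apply_eq_smul (hA.apply_self_ne_zero α hα) ?_ ?_⟩ <;>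
    intro β hβ <;> obtain ⟨hβ, hβπ⟩ := Finset.mem_filter.mp hβ
  · exact fun h => hA.neg_notMem β hβ (Finset.mem_filter.mp h).1
  · simpa only [Finset.mem_filter, neg_mem_iff, rootReflection_mem hαπ hβπ, and_true]
      using hA.rootReflection_mem_or_neg_mem α hα β hβ

theorem IsHalfRootSystem.exists_canonicalOperator_apply_eq_smul [NeZero (2 : K)]
    (hA : IsHalfRootSystem B A) (hα : α ∈ A) : ∃ c : K, canonicalOperator B A α = c • α := by
  simpa using hA.exists_canonicalOperator_filter_apply_eq_smul hα (π := ⊤) Submodule.mem_top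

theorem canonicalOperator_apply_eq_of_forall (hB : B.SeparatingLeft) {x : V}
    (hx : ∀ y, ∑ β ∈ A, B β x * B β y = B α y) : canonicalOperator B A x = α := by
  refine LinearMap.ker_eq_bot.mp (LinearMap.separatingLeft_iff_ker_eq_bot.mp hB) ?_
  ext y
  rw [apply_canonicalOperator_left, hx]

theorem canonicalOperator_injective (hB : B.SeparatingRight)
    (hsurj : Function.Surjective (canonicalOperator B A)) :
    Function.Injective (canonicalOperator B A) := by
  refine (injective_iff_map_eq_zero _).mpr fun x hx => hB x fun y => ?_
  obtain ⟨z, rfl⟩ := hsurj y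
  rw [apply_canonicalOperator_left_comm, hx, map_zero, LinearMap.zero_apply]

theorem B3t_is_vee_system_general [NeZero (2 : K)] (hB : B.Nondegenerate)
    (hA : IsHalfRootSystem B A) {G : V → V → K} (hG : ∀ x y, G x y = ∑ α ∈ A, B α x * B α y)
    {vee : V → V} (hvee : ∀ α y, G (vee α) y = B α y) :
    ∀ α ∈ A, ∀ π : Submodule K V, α ∈ π → ∃ lam : K,
      ∑ β ∈ A.filter (· ∈ π), B β (vee α) • vee β = lam • vee α := by
  intro α hα π hαπ
  have apply_vee (β : V) : canonicalOperator B A (vee β) = β :=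
    canonicalOperator_apply_eq_of_forall hB.1 fun y => by rw [← hG, hvee]
  have injective := canonicalOperator_injective hB.2 fun α => ⟨vee α, apply_vee α⟩
  obtain ⟨μ, hμ⟩ := hA.exists_canonicalOperator_apply_eq_smul hα
  obtain ⟨c, hc⟩ := hA.exists_canonicalOperator_filter_apply_eq_smul hα hαπ
  have eq_smul_vee : α = μ • vee α := injective (by rw [hμ, map_smul, apply_vee])
  have hμ0 : μ ≠ 0 := by
    rintro rfl
    exact hA.apply_self_ne_zero α hα (by rw [eq_smul_vee]; simp)
  have vee_eq : vee α = μ⁻¹ • α := by rw [eq_inv_smul_iff₀ hμ0, ← eq_smul_vee]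
  refine ⟨μ⁻¹ * c, injective ?_⟩
  calc canonicalOperator B A (∑ β ∈ A.filter (· ∈ π), B β (vee α) • vee β)
      = canonicalOperator B (A.filter (· ∈ π)) (vee α) := by
        simp only [map_sum, map_smul, apply_vee, canonicalOperator_apply]
    _ = (μ⁻¹ * c) • α := by rw [vee_eq, map_smul, hc, smul_smul]
    _ = canonicalOperator B A ((μ⁻¹ * c) • vee α) := by rw [map_smul, apply_vee]

end Reflection

/-- The system `B₃(t) = {e_i ± e_j (i < j), t e_i}` in `ℝ³`. -/
noncomputable def coxeterB3 (t : ℝ) : Finset (Fin 3 → ℝ) :=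
  {![1, 1, 0], ![1, -1, 0], ![1, 0, 1], ![1, 0, -1], ![0, 1, 1], ![0, 1, -1],
    t • ![1, 0, 0], t • ![0, 1, 0], t • ![0, 0, 1]}

theorem nondegenerate_dotProductBilin {n R : Type*} [Fintype n] [CommSemiring R] :
    (dotProductBilin R R : (n → R) →ₗ[R] (n → R) →ₗ[R] R).Nondegenerate :=
  ⟨fun _ => dotProduct_eq_zero _,
    fun v h => dotProduct_eq_zero v fun w => dotProduct_comm v w ▸ h w⟩

/-- The full system `±B₃(t)`, described by the absolute values of the coordinates: up to order,
these are `(0, 1, 1)` or `(|t|, 0, 0)`. -/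
def signedCoxeterB3 (t : ℝ) : Set (Fin 3 → ℝ) :=
  {x | ∃ i, (|x i| = 0 ∧ ∀ j ≠ i, |x j| = 1) ∨ (|x i| = |t| ∧ ∀ j ≠ i, |x j| = 0)}

theorem mem_signedCoxeterB3_iff {t : ℝ} {x : Fin 3 → ℝ} :
    x ∈ signedCoxeterB3 t ↔ x ∈ coxeterB3 t ∨ -x ∈ coxeterB3 t := by
  have eq_iff (a b c : ℝ) : x = ![a, b, c] ↔ x 0 = a ∧ x 1 = b ∧ x 2 = c := by
    simp [funext_iff, Fin.forall_fin_succ]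
  simp only [signedCoxeterB3, coxeterB3, Set.mem_ofPred_eq, Finset.mem_insert,
    Finset.mem_singleton, neg_eq_iff_eq_neg, Fin.exists_fin_succ, Fin.forall_fin_succ]
  simp only [abs_eq_zero, abs_eq (zero_le_one' ℝ), abs_eq_abs, ne_eq, not_true_eq_false,
    not_false_eq_true, IsEmpty.forall_iff, IsEmpty.exists_iff, forall_const, Fin.succ_zero_eq_one,
    Fin.succ_one_eq_two, Fin.reduceEq, Fin.succ_ne_zero, Fin.succ_inj, one_ne_zero, zero_ne_one,
    and_true, true_and, and_self, or_false, eq_iff, smul_cons, smul_eq_mul, mul_one, mul_zero,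
    smul_empty, neg_cons, neg_zero, neg_empty, neg_neg, Fin.isValue,
    Nat.succ_eq_add_one, Nat.reduceAdd]
  clear eq_iff
  grind (splits := 40)

theorem mem_signedCoxeterB3_of_abs_eq {t : ℝ} {x y : Fin 3 → ℝ} (σ : Equiv.Perm (Fin 3))
    (hxy : ∀ k, |y k| = |x (σ k)|) (hx : x ∈ signedCoxeterB3 t) : y ∈ signedCoxeterB3 t := by
  obtain ⟨i, hi⟩ := hx
  obtain ⟨i, rfl⟩ := σ.surjective i
  have forall_iff (c : ℝ) : (∀ j ≠ i, |x (σ j)| = c) ↔ ∀ j ≠ σ i, |x j| = c := by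
    simp only [σ.surjective.forall (p := fun j => j ≠ σ i → |x j| = c), σ.injective.ne_iff]
  refine ⟨i, ?_⟩
  simpa only [hxy, forall_iff] using hi

theorem eq_single_of_mem_coxeterB3 {t : ℝ} {α : Fin 3 → ℝ} (hα : α ∈ coxeterB3 t) :
    (∃ i j ε, i ≠ j ∧ |ε| = 1 ∧ α = Pi.single i 1 + Pi.single j ε) ∨ ∃ i, α = Pi.single i t := by
  simp only [coxeterB3, Finset.mem_insert, Finset.mem_singleton] at hα
  rcases hα with rfl | rfl | rfl | rfl | rfl | rfl | rfl | rfl | rfl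
  · exact .inl ⟨0, 1, 1, by simp [funext_iff, Fin.forall_fin_succ]⟩
  · exact .inl ⟨0, 1, -1, by simp [funext_iff, Fin.forall_fin_succ]⟩
  · exact .inl ⟨0, 2, 1, by simp [funext_iff, Fin.forall_fin_succ]⟩
  · exact .inl ⟨0, 2, -1, by simp [funext_iff, Fin.forall_fin_succ]⟩
  · exact .inl ⟨1, 2, 1, by simp [funext_iff, Fin.forall_fin_succ]⟩
  · exact .inl ⟨1, 2, -1, by simp [funext_iff, Fin.forall_fin_succ]⟩
  · exact .inr ⟨0, by simp [funext_iff, Fin.forall_fin_succ]⟩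
  · exact .inr ⟨1, by simp [funext_iff, Fin.forall_fin_succ]⟩
  · exact .inr ⟨2, by simp [funext_iff, Fin.forall_fin_succ]⟩

section Coordinates

variable {n K : Type*} [Fintype n] [DecidableEq n] [Field K] [LinearOrder K]

theorem abs_rootReflection_single {t : K} (ht : t ≠ 0) (i : n) (x : n → K) (k : n) :
    |rootReflection (dotProductBilin K K) (Pi.single i t) x k| = |x k| := by
  simp only [rootReflection_apply, dotProductBilin, LinearMap.coe_mk, AddHom.coe_mk,
    dotProduct_single, Pi.single_eq_same, Pi.sub_apply, Pi.smul_apply, smul_eq_mul]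
  rcases eq_or_ne k i with rfl | hki
  · rw [abs_eq_abs, Pi.single_eq_same]
    right
    field_simp
    ring
  · simp only [Pi.single_eq_of_ne hki, mul_zero, sub_zero]

theorem abs_rootReflection_single_add_single [IsStrictOrderedRing K] {i j : n} (hij : i ≠ j)
    {ε : K} (hε : |ε| = 1) (x : n → K) (k : n) :
    |rootReflection (dotProductBilin K K) (Pi.single i 1 + Pi.single j ε) x k| =
      |x (Equiv.swap i j k)| := by
  have hε_sq : ε * ε = 1 := by rw [← abs_mul_abs_self, hε, one_mul]
  have reflection_eq :
      rootReflection (dotProductBilin K K) (Pi.single i 1 + Pi.single j ε) x =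
        x - (x i + x j * ε) • (Pi.single i 1 + Pi.single j ε) := by
    simp [rootReflection_apply, dotProductBilin, dotProduct_add, hij, hij.symm, hε_sq,
      one_add_one_eq_two]
  rw [reflection_eq]
  rcases eq_or_ne k i with rfl | hki
  · simp [hij, abs_mul, hε]
  rcases eq_or_ne k j with rfl | hkj
  · have neg_eq : x k - (x i + x k * ε) * ε = -(x i * ε) := by linear_combination -x k * hε_sq
    simp [hki, neg_eq, abs_mul, hε]
  · simp [hki, hkj, Equiv.swap_apply_of_ne_of_ne]

end Coordinates

theorem isHalfRootSystem_coxeterB3 {t : ℝ} (ht : t ≠ 0) :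
    IsHalfRootSystem (dotProductBilin ℝ ℝ) (coxeterB3 t) where
  apply_self_ne_zero := by
    simp [coxeterB3, dotProductBilin, dotProduct, Fin.sum_univ_three, ht]
  neg_notMem := by
    have neg_ne : -t ≠ t := fun h => ht (by linarith)
    norm_num [coxeterB3, ht, neg_ne]
  rootReflection_mem_or_neg_mem := by
    intro α hα β hβ
    rw [← mem_signedCoxeterB3_iff]
    have hβ_signed : β ∈ signedCoxeterB3 t := mem_signedCoxeterB3_iff.mpr (.inl hβ)
    rcases eq_single_of_mem_coxeterB3 hα with ⟨i, j, ε, hij, hε, rfl⟩ | ⟨i, rfl⟩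
    · exact mem_signedCoxeterB3_of_abs_eq (.swap i j)
        (abs_rootReflection_single_add_single hij hε β) hβ_signed
    · exact mem_signedCoxeterB3_of_abs_eq 1 (abs_rootReflection_single ht i β) hβ_signed

/-- The Coxeter root system `B_3(t) = {e_i ± e_j (i<j), t e_i}` in `ℝ³`
(`t ≠ 0`) is a `∨`-system: for every `α` in the system and every 2-plane `π ∋ α`,
`∑ β ∈ π∩A, ⟨β, α^∨⟩ β^∨` is a scalar multiple of `α^∨`, where `α^∨` is the dual of `α`
with respect to the canonical form `G(x,y) = ∑ α, ⟨α,x⟩⟨α,y⟩`. -/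
theorem B3t_is_vee_system
    (t : ℝ) (ht : t ≠ 0)
    (A : Finset (Fin 3 → ℝ))
    (hA : A = {![1, 1, 0], ![1, -1, 0], ![1, 0, 1], ![1, 0, -1], ![0, 1, 1], ![0, 1, -1],
      t • ![1, 0, 0], t • ![0, 1, 0], t • ![0, 0, 1]})
    (G : (Fin 3 → ℝ) → (Fin 3 → ℝ) → ℝ)
    (hG : ∀ x y, G x y = ∑ α ∈ A, (α ⬝ᵥ x) * (α ⬝ᵥ y))
    (vee : (Fin 3 → ℝ) → (Fin 3 → ℝ))
    (hvee : ∀ α y, G (vee α) y = α ⬝ᵥ y) :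
    ∀ α ∈ A, ∀ π : Submodule ℝ (Fin 3 → ℝ),
      Module.finrank ℝ π = 2 → α ∈ π → ∃ lam : ℝ,
        ∑ β ∈ A.filter (· ∈ π), (β ⬝ᵥ vee α) • vee β = lam • vee α := by
  subst hA
  exact fun α hα π _ => B3t_is_vee_system_general nondegenerate_dotProductBilin
    (isHalfRootSystem_coxeterB3 ht) hG hvee α hα π
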